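/- Let K be an infinite field of characteristic ≠ 2, n ≥ 1, and consider the polynomial ring K[t_{ij}] in commuting variables t_{ij}, i = 1, 2, …, j = 1, …, n. For indices i, i' set t_i∘t_{i'} = Σ_{k=1}^{n} t_{ik} t_{i'k}, and let R be the K-subalgebra of K[t_{ij}] generated by all t_i∘t_{i'}. For a double row (p₁ … p_m | q₁ … q_m) of positive integers set φ = det((t_{p_a}∘t_{q_b})_{1≤a,b≤m}), and for a double tableau T with rows of weakly decreasing lengths m₁ ≥ m₂ ≥ … ≥ m_k set φ(T) = the product of the φ's of its rows. Call T doubly standard if in each row p_{i1} < p_{i2} < … < p_{im_i} and q_{i1} < q_{i2} < … < q_{im_i}, and p_{ij} ≤ q_{ij} and q_{ij} ≤ p_{i+1,j} for all i, j. Then the polynomials φ(T), where T ranges over all doubly standard tableaux of positive integers with first-row length m₁ ≤ n, form a basis of R as a K-vector space. -/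

import Mathlib

open MvPolynomial

/-- The inner product `t_i ∘ t_{i'} = Σ_{k} t_{ik} t_{i'k}` in the polynomial ring
`K[t_{ij}]` (the row indices `i` range over `ℕ`, the column indices over `Fin n`). -/
noncomputable def tpair (n : ℕ) (K : Type*) [Field K] (i i' : ℕ) :
    MvPolynomial (ℕ × Fin n) K :=
  ∑ k : Fin n, X (i, k) * X (i', k)

/-- The subalgebra `R = K[(t_i ∘ t_{i'})]` generated by all the inner products. -/
noncomputable def Rsub (n : ℕ) (K : Type*) [Field K] :
    Subalgebra K (MvPolynomial (ℕ × Fin n) K) :=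
  Algebra.adjoin K (Set.range fun p : ℕ × ℕ => tpair n K p.1 p.2)

/-- A double row `(p₁ … p_m | q₁ … q_m)` of a double tableau. -/
structure DRow where
  m : ℕ
  p : Fin m → ℕ
  q : Fin m → ℕ

/-- The polynomial of a double row: `det ((t_{p_a} ∘ t_{q_b}))`. -/
noncomputable def rowPoly (n : ℕ) (K : Type*) [Field K] (r : DRow) :
    MvPolynomial (ℕ × Fin n) K :=
  Matrix.det (Matrix.of fun a b : Fin r.m => tpair n K (r.p a) (r.q b))

/-- The polynomial of a double tableau: the product of the polynomials of its rows. -/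
noncomputable def tabPoly (n : ℕ) (K : Type*) [Field K] (T : List DRow) :
    MvPolynomial (ℕ × Fin n) K :=
  (T.map (rowPoly n K)).prod

/-- A double tableau is doubly standard if its row lengths weakly decrease, each row is
strictly increasing in both halves, `p_{ij} ≤ q_{ij}`, and `q_{ij} ≤ p_{i+1,j}`. -/
def DoublyStandard (T : List DRow) : Prop :=
  List.Chain' (fun r s => s.m ≤ r.m) T ∧
  (∀ r ∈ T, StrictMono r.p ∧ StrictMono r.q) ∧
  (∀ r ∈ T, ∀ j, r.p j ≤ r.q j) ∧
  List.Chain' (fun r s => ∀ (j : Fin s.m) (hj : (j : ℕ) < r.m), r.q ⟨j, hj⟩ ≤ s.p j) T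

/-!
Independence: for rows of length at most `n`, the lexicographically leading monomial of `φ(T)`
contains `t_{ik}` as often as `i` occurs in the `k`-th column of `T`. In a doubly standard tableau
that column, read as `p₁ₖ ≤ q₁ₖ ≤ p₂ₖ ≤ q₂ₖ ≤ …`, is sorted, so the leading monomial determines `T`.

Spanning: at a violation of standardness, form the alternating (Garnir) sum of `φ(T)` over all
permutations of the entries in the positions that straddle the violation. These are more than half
of the entries concerned: the sum vanishes when they lie in one row, by the symmetry of the pairing,
and when they lie in two rows it is a combination of tableaux with a longer row. The permutations
within the two groups of positions repeat `φ(T)`, and the other ones move larger entries to later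
half rows. The relation thus multiplies `φ(T)` by the number of the former; this factor is cancelled
over the generic symmetric pairing, with values in `ℤ[Sym2 ℕ]`, before specialising to `t_i ∘ t_j`.
-/

open Function (updateFinset)

section InvariantSums

variable {G M : Type*} [Group G]

theorem apply_quotient_out {S : Subgroup G} {f : G → M} (hf : ∀ g, ∀ h ∈ S, f (g * h) = f g)
    (g : G) : f (g : G ⧸ S).out = f g := by
  obtain ⟨h, hh⟩ := QuotientGroup.mk_out_eq_mul S g
  rw [hh, hf g h h.2]

variable [AddCommGroup M]

theorem sum_eq_card_nsmul_sum_quotient [Fintype G] (S : Subgroup G) [Fintype (G ⧸ S)] (f : G → M)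
    (hf : ∀ g, ∀ h ∈ S, f (g * h) = f g) :
    ∑ g, f g = Nat.card S • ∑ c : G ⧸ S, f c.out := by
  classical
  calc ∑ g, f g = ∑ g : G, f (g : G ⧸ S).out := by simp only [apply_quotient_out hf]
    _ = ∑ x : (G ⧸ S) × S, f x.1.out :=
        Fintype.sum_equiv Subgroup.groupEquivQuotientProdSubgroup _ _ fun _ => rfl
    _ = Nat.card S • ∑ c : G ⧸ S, f c.out := by
        simp [Fintype.sum_prod_type, Finset.smul_sum]

theorem exists_sum_eq_card_nsmul_add [Fintype G] (S : Subgroup G) (f : G → M)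
    (hf : ∀ g, ∀ h ∈ S, f (g * h) = f g) :
    ∃ y ∈ AddSubgroup.closure (f '' (S : Set G)ᶜ), ∑ g, f g = Nat.card S • (f 1 + y) := by
  classical
  refine ⟨∑ c ∈ Finset.univ.erase ((1 : G) : G ⧸ S), f c.out, sum_mem fun c hc => ?_, ?_⟩
  · refine AddSubgroup.subset_closure ⟨c.out, fun hmem => Finset.ne_of_mem_erase hc ?_, rfl⟩
    rw [← QuotientGroup.out_eq' c, eq_comm, QuotientGroup.eq]
    simpa using hmem
  · rw [sum_eq_card_nsmul_sum_quotient S f hf, ← apply_quotient_out hf 1,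
      Finset.add_sum_erase _ (fun c : G ⧸ S => f c.out) (Finset.mem_univ _)]

open Equiv.Perm in
theorem exists_sum_sign_smul_eq_card_nsmul_add {ι X : Type*} [Fintype ι] [DecidableEq ι]
    (S : Subgroup (Equiv.Perm ι)) (F : (ι → X) → M)
    (hF : ∀ z, ∀ h ∈ S, F (z ∘ h) = sign h • F z) (z : ι → X) :
    ∃ y ∈ AddSubgroup.closure ((fun σ : Equiv.Perm ι => F (z ∘ σ)) '' (S : Set (Equiv.Perm ι))ᶜ),
      ∑ σ : Equiv.Perm ι, sign σ • F (z ∘ σ) = Nat.card S • (F z + y) := by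
  obtain ⟨y, hy, hsum⟩ := exists_sum_eq_card_nsmul_add S
    (fun σ : Equiv.Perm ι => sign σ • F (z ∘ σ)) fun σ h hh => by
      rw [coe_mul, ← Function.comp_assoc, hF _ h hh, smul_smul, Equiv.Perm.sign_mul, mul_assoc,
        Int.units_mul_self, mul_one]
  refine ⟨y, ?_, by simpa using hsum⟩
  refine (AddSubgroup.closure_le _).2 ?_ hy
  rintro _ ⟨σ, hσ, rfl⟩
  have hmem : F (z ∘ σ) ∈ AddSubgroup.closure
      ((fun σ : Equiv.Perm ι => F (z ∘ σ)) '' (S : Set (Equiv.Perm ι))ᶜ) :=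
    AddSubgroup.subset_closure ⟨σ, hσ, rfl⟩
  rcases Int.units_eq_one_or (sign σ) with h | h
  · simpa [h] using hmem
  · simpa [h] using hmem

theorem sum_sign_smul_comp_eq_zero {ι X : Type*} [Fintype ι] [DecidableEq ι] (F : (ι → X) → M)
    {a b : ι} (hab : a ≠ b) (hF : ∀ z, F (z ∘ Equiv.swap a b) = F z) (z : ι → X) :
    ∑ σ : Equiv.Perm ι, Equiv.Perm.sign σ • F (z ∘ σ) = 0 := by
  refine Finset.sum_involution (fun σ _ => σ * Equiv.swap a b) (fun σ _ => ?_) (fun σ _ _ h => ?_)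
    (fun _ _ => Finset.mem_univ _) (fun σ _ => by simp [mul_assoc])
  · rw [Equiv.Perm.coe_mul, ← Function.comp_assoc, hF, Equiv.Perm.sign_mul,
      Equiv.Perm.sign_swap hab, mul_neg_one, Units.neg_smul, add_neg_cancel]
  · exact hab (Equiv.swap_eq_one_iff.1 (mul_eq_left.1 h))

end InvariantSums

section Exchange

theorem sum_lt_sum_of_card_eq {ι M : Type*} [DecidableEq ι] [AddCommMonoid M] [PartialOrder M]
    [IsOrderedCancelAddMonoid M] {s t : Finset ι} {f : ι → M} {c : M} (hcard : s.card = t.card)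
    (hne : s ≠ t) (hs : ∀ i ∈ s \ t, f i ≤ c) (ht : ∀ i ∈ t \ s, c < f i) :
    ∑ i ∈ s, f i < ∑ i ∈ t, f i := by
  have hnonempty : (t \ s).Nonempty :=
    Finset.sdiff_nonempty.2 fun h => hne (Finset.eq_of_subset_of_card_le h hcard.le).symm
  rw [← Finset.sum_sdiff_lt_sum_sdiff]
  calc ∑ i ∈ s \ t, f i ≤ (s \ t).card • c := Finset.sum_le_card_nsmul _ _ _ hs
    _ = ∑ _i ∈ t \ s, c := by rw [Finset.card_sdiff_comm hcard, Finset.sum_const]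
    _ < ∑ i ∈ t \ s, f i := Finset.sum_lt_sum_of_nonempty hnonempty ht

theorem sum_apply_inr_lt_of_notMem_range {α β M : Type*} [Finite α] [Fintype β] [AddCommMonoid M]
    [PartialOrder M] [IsOrderedCancelAddMonoid M] {z : α ⊕ β → M} {c : M}
    (hα : ∀ a, z (.inl a) ≤ c) (hβ : ∀ b, c < z (.inr b)) {σ : Equiv.Perm (α ⊕ β)}
    (hσ : σ ∉ (Equiv.Perm.sumCongrHom α β).range) :
    ∑ b, z (σ (.inr b)) < ∑ b, z (.inr b) := by
  classical
  let t : Finset (α ⊕ β) := Finset.univ.map .inr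
  have hinl {x : α ⊕ β} (hx : x ∉ t) : ∃ a, x = .inl a := by
    rcases x with a | b
    · exact ⟨a, rfl⟩
    · simp [t] at hx
  have hne : t.map σ.toEmbedding ≠ t := fun h => by
    refine hσ (Equiv.Perm.mem_sumCongrHom_range_of_perm_mapsTo_inl ?_)
    rintro _ ⟨a, rfl⟩
    obtain ⟨a', ha'⟩ := hinl (x := σ (.inl a)) fun hmem => by
      rw [← h, Finset.mem_map_equiv] at hmem
      simp [t] at hmem
    exact ⟨a', ha'.symm⟩
  have hlt := sum_lt_sum_of_card_eq (f := z) (c := c) (Finset.card_map _) hne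
    (fun x hx => by
      obtain ⟨a, rfl⟩ := hinl (Finset.mem_sdiff.1 hx).2
      exact hα a)
    (fun x hx => by
      obtain ⟨b, -, rfl⟩ := Finset.mem_map.1 (Finset.mem_sdiff.1 hx).1
      exact hβ b)
  simpa [t, Finset.sum_map] using hlt

end Exchange

section Garnir

variable {ι κ X M : Type*}

/-- The entries of `u` in the positions `S` together with those of `v` in the positions `T`. -/
def chosenEntries (S : Finset ι) (T : Finset κ) (u : ι → X) (v : κ → X) : S ⊕ T → X :=
  Sum.elim (fun i => u i) fun k => v k

section UpdateFinset

variable [DecidableEq ι]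

theorem updateFinset_comp_perm (u : ι → X) (S : Finset ι) (z : S → X) (h : Equiv.Perm S) :
    updateFinset u S (z ∘ h) = updateFinset u S z ∘ Equiv.Perm.ofSubtype h := by
  ext i
  by_cases hi : i ∈ S
  · simp [updateFinset, hi, Equiv.Perm.ofSubtype_apply_of_mem h hi]
  · simp [updateFinset, hi, Equiv.Perm.ofSubtype_apply_of_not_mem h hi]

theorem updateFinset_self (u : ι → X) (S : Finset ι) : updateFinset u S (fun i => u i) = u := by
  ext i
  simp [updateFinset]

@[to_additive]
theorem prod_apply_updateFinset {N : Type*} [CommMonoid N] [Fintype ι] (u : ι → X) (S : Finset ι)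
    (z : S → X) (g : ι → X → N) :
    ∏ i, g i (updateFinset u S z i) = (∏ i : S, g i (z i)) * ∏ i ∈ Sᶜ, g i (u i) := by
  rw [← Finset.prod_mul_prod_compl S, ← Finset.prod_coe_sort S]
  congr 1
  · exact Finset.prod_congr rfl fun i _ => by simp [updateFinset]
  · exact Finset.prod_congr rfl fun i hi => by simp [updateFinset, Finset.mem_compl.1 hi]

theorem sum_updateFinset_inr_lt [Fintype ι] [AddCommMonoid X] [PartialOrder X]
    [IsOrderedCancelAddMonoid X] {S : Finset κ} {T : Finset ι} {u : κ → X} {v : ι → X}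
    {c : X} (hu : ∀ k ∈ S, u k ≤ c) (hv : ∀ i ∈ T, c < v i) {σ : Equiv.Perm (S ⊕ T)}
    (hσ : σ ∉ (Equiv.Perm.sumCongrHom S T).range) :
    ∑ i, updateFinset v T (chosenEntries S T u v ∘ σ ∘ Sum.inr) i < ∑ i, v i := by
  rw [sum_apply_updateFinset v T _ fun _ x => x, ← Finset.sum_add_sum_compl T v,
    ← Finset.sum_coe_sort T v]
  exact add_lt_add_left (sum_apply_inr_lt_of_notMem_range (z := chosenEntries S T u v)
    (fun a => hu a a.2) (fun b => hv b b.2) hσ) _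

end UpdateFinset

variable [DecidableEq ι] [DecidableEq κ]

/-- The Garnir sum of a function `Φ` of two tuples: the entries of `u` in the positions `S` and
those of `v` in the positions `T` are permuted among themselves in all possible ways, and the values
of `Φ` are added up with the signs of these permutations. -/
def garnirSum [AddCommGroup M] (Φ : (ι → X) → (κ → X) → M) (S : Finset ι) (T : Finset κ)
    (u : ι → X) (v : κ → X) : M :=
  ∑ σ : Equiv.Perm (S ⊕ T), Equiv.Perm.sign σ •
    Φ (updateFinset u S (chosenEntries S T u v ∘ σ ∘ Sum.inl))
      (updateFinset v T (chosenEntries S T u v ∘ σ ∘ Sum.inr))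

variable [Fintype ι] [Fintype κ] [AddCommMonoid X]

theorem sum_updateFinset_add_sum_updateFinset (S : Finset ι) (T : Finset κ) (u : ι → X)
    (v : κ → X) (σ : Equiv.Perm (S ⊕ T)) :
    ∑ i, updateFinset u S (chosenEntries S T u v ∘ σ ∘ Sum.inl) i +
      ∑ k, updateFinset v T (chosenEntries S T u v ∘ σ ∘ Sum.inr) k =
    ∑ i, u i + ∑ k, v k := by
  have hσ := Equiv.sum_comp σ (chosenEntries S T u v)
  rw [Fintype.sum_sum_type, Fintype.sum_sum_type] at hσ
  rw [sum_apply_updateFinset u S _ fun _ x => x, sum_apply_updateFinset v T _ fun _ x => x,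
    ← Finset.sum_add_sum_compl S u, ← Finset.sum_add_sum_compl T v, ← Finset.sum_coe_sort S u,
    ← Finset.sum_coe_sort T v, add_add_add_comm, add_add_add_comm (∑ i : S, u i)]
  exact congrArg (· + _) hσ

variable [PartialOrder X] [IsOrderedCancelAddMonoid X]

open Equiv.Perm in
theorem sub_mem_closure_of_garnirSum_eq [AddCommGroup M] [IsAddTorsionFree M]
    {Φ : (ι → X) → (κ → X) → M}
    (hΦl : ∀ u v (τ : Equiv.Perm ι), Φ (u ∘ τ) v = sign τ • Φ u v)
    (hΦr : ∀ u v (τ : Equiv.Perm κ), Φ u (v ∘ τ) = sign τ • Φ u v)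
    {S : Finset ι} {T : Finset κ} {u : ι → X} {v : κ → X} {c : X}
    (hu : ∀ i ∈ S, u i ≤ c) (hv : ∀ k ∈ T, c < v k) {E : M}
    (hE : garnirSum Φ S T u v = Nat.card (Equiv.Perm S × Equiv.Perm T) • E) :
    E - Φ u v ∈ AddSubgroup.closure {x | ∃ u' v', ∑ k, v' k < ∑ k, v k ∧
      ∑ i, u' i + ∑ k, v' k = ∑ i, u i + ∑ k, v k ∧ Φ u' v' = x} := by
  let F (z : S ⊕ T → X) : M := Φ (updateFinset u S (z ∘ Sum.inl)) (updateFinset v T (z ∘ Sum.inr))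
  have hF z : ∀ h ∈ (sumCongrHom S T).range, F (z ∘ h) = sign h • F z := by
    rintro _ ⟨⟨h₁, h₂⟩, rfl⟩
    calc F (z ∘ sumCongrHom S T (h₁, h₂))
      _ = Φ (updateFinset u S ((z ∘ Sum.inl) ∘ h₁)) (updateFinset v T ((z ∘ Sum.inr) ∘ h₂)) := rfl
      _ = sign (sumCongrHom S T (h₁, h₂)) • F z := by
        rw [updateFinset_comp_perm, updateFinset_comp_perm, hΦl, hΦr, smul_smul]
        simp [F]
  obtain ⟨y, hy, hsum⟩ := exists_sum_sign_smul_eq_card_nsmul_add (sumCongrHom S T).range F hF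
    (chosenEntries S T u v)
  have hEy : E = Φ u v + y := by
    have hcard : Nat.card (sumCongrHom S T).range = Nat.card (Equiv.Perm S × Equiv.Perm T) :=
      (Nat.card_congr (MonoidHom.ofInjective sumCongrHom_injective).toEquiv).symm
    have hF0 : F (chosenEntries S T u v) = Φ u v := by
      simp only [F, chosenEntries, Sum.elim_comp_inl, Sum.elim_comp_inr, updateFinset_self]
    exact nsmul_right_injective Nat.card_pos.ne' (hE.symm.trans (hsum.trans (by rw [hF0, hcard])))
  rw [hEy, add_sub_cancel_left]
  refine AddSubgroup.closure_mono ?_ hy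
  rintro _ ⟨σ, hσ, rfl⟩
  exact ⟨_, _, sum_updateFinset_inr_lt hu hv hσ, sum_updateFinset_add_sum_updateFinset S T u v σ,
    rfl⟩

end Garnir

section PairDet

variable {ι κ α β A : Type*} [Fintype ι] [DecidableEq ι] [Fintype κ] [DecidableEq κ] [CommRing A]

/-- The determinant of the matrix of values of a pairing `s` on two tuples of the same shape. -/
def pairDet (s : α → β → A) (p : ι → α) (q : ι → β) : A :=
  Matrix.det (Matrix.of fun a b => s (p a) (q b))

section

variable (s : α → β → A)

theorem pairDet_eq_sum_left (p : ι → α) (q : ι → β) :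
    pairDet s p q = ∑ τ : Equiv.Perm ι, Equiv.Perm.sign τ • ∏ i, s (p (τ i)) (q i) :=
  Matrix.det_apply _

theorem pairDet_comp_perm_left (p : ι → α) (q : ι → β) (τ : Equiv.Perm ι) :
    pairDet s (p ∘ τ) q = Equiv.Perm.sign τ • pairDet s p q := by
  rw [Units.smul_def, zsmul_eq_mul]
  exact Matrix.det_permute τ (Matrix.of fun a b => s (p a) (q b))

theorem pairDet_comp_perm_right (p : ι → α) (q : ι → β) (τ : Equiv.Perm ι) :
    pairDet s p (q ∘ τ) = Equiv.Perm.sign τ • pairDet s p q := by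
  rw [Units.smul_def, zsmul_eq_mul]
  exact Matrix.det_permute' τ (Matrix.of fun a b => s (p a) (q b))

theorem pairDet_comp_equiv (e : κ ≃ ι) (p : ι → α) (q : ι → β) :
    pairDet s (p ∘ e) (q ∘ e) = pairDet s p q :=
  Matrix.det_submatrix_equiv_self e (Matrix.of fun a b => s (p a) (q b))

theorem pairDet_swap (p : ι → α) (q : ι → β) :
    pairDet (fun b a => s a b) q p = pairDet s p q :=
  Matrix.det_transpose _

theorem pairDet_eq_sum_right (p : ι → α) (q : ι → β) :
    pairDet s p q = ∑ τ : Equiv.Perm ι, Equiv.Perm.sign τ • ∏ i, s (p i) (q (τ i)) := by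
  rw [← pairDet_swap, pairDet_eq_sum_left]

end

theorem pairDet_comm {s : α → α → A} (hs : ∀ i j, s i j = s j i) (p q : ι → α) :
    pairDet s p q = pairDet s q p := by
  rw [← pairDet_swap, show (fun b a => s a b) = s from funext₂ fun b a => hs a b]

theorem garnirSum_pairDet_eq_zero {s : α → α → A} (hs : ∀ i j, s i j = s j i) {S T : Finset ι}
    (hST : Fintype.card ι < S.card + T.card) (u v : ι → α) : garnirSum (pairDet s) S T u v = 0 := by
  simp only [garnirSum, pairDet_eq_sum_left, Finset.smul_sum]
  rw [Finset.sum_comm]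
  refine Finset.sum_eq_zero fun τ _ => ?_
  obtain ⟨b, hb⟩ : ((S.map τ.symm.toEmbedding) ∩ T).Nonempty :=
    Finset.inter_nonempty_of_card_lt_card_add_card (Finset.subset_univ _) (Finset.subset_univ _)
      (by rwa [Finset.card_map])
  obtain ⟨hbS, hbT⟩ := Finset.mem_inter.1 hb
  rw [Finset.mem_map_equiv, Equiv.symm_symm] at hbS
  have hinv (z : S ⊕ T → α) (i : ι) :
      s (updateFinset u S (z ∘ Equiv.swap (.inl ⟨τ b, hbS⟩) (.inr ⟨b, hbT⟩) ∘ Sum.inl) (τ i))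
        (updateFinset v T (z ∘ Equiv.swap (.inl ⟨τ b, hbS⟩) (.inr ⟨b, hbT⟩) ∘ Sum.inr) i) =
      s (updateFinset u S (z ∘ Sum.inl) (τ i)) (updateFinset v T (z ∘ Sum.inr) i) := by
    by_cases hi : i = b
    · subst hi
      simp [updateFinset, hbS, hbT, hs]
    · have hτ : (τ i) ≠ τ b := τ.injective.ne hi
      simp [updateFinset, Equiv.swap_apply_of_ne_of_ne, hi, hτ]
  exact sum_sign_smul_comp_eq_zero (fun z => Equiv.Perm.sign τ • ∏ i,
    s (updateFinset u S (z ∘ Sum.inl) (τ i)) (updateFinset v T (z ∘ Sum.inr) i))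
    Sum.inl_ne_inr (fun z => congrArg _ (Finset.prod_congr rfl fun i _ => hinv z i)) _

/-- The minor of `s` on the rows of `x`, `y` and the columns of `u`, `v` in the positions `S`, `T`,
multiplied by the entries of `s` in the remaining positions: the terms of the Garnir sum of a
product of two determinants. -/
def garnirTerm (s : α → β → A) (S : Finset ι) (T : Finset κ) (x : ι → α) (y : κ → α) (u : ι → β)
    (v : κ → β) : A :=
  (∏ i ∈ Sᶜ, s (x i) (u i)) * (∏ k ∈ Tᶜ, s (y k) (v k)) *
    pairDet s (chosenEntries S T x y) (chosenEntries S T u v)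

theorem sum_sign_smul_prod_mul_prod_eq_garnirTerm (s : α → β → A) (S : Finset ι) (T : Finset κ)
    (x : ι → α) (y : κ → α) (u : ι → β) (v : κ → β) :
    ∑ σ : Equiv.Perm (S ⊕ T), Equiv.Perm.sign σ •
      ((∏ i, s (x i) (updateFinset u S (chosenEntries S T u v ∘ σ ∘ Sum.inl) i)) *
        ∏ k, s (y k) (updateFinset v T (chosenEntries S T u v ∘ σ ∘ Sum.inr) k)) =
      garnirTerm s S T x y u v := by
  rw [garnirTerm, pairDet_eq_sum_right, Finset.mul_sum]
  refine Finset.sum_congr rfl fun σ _ => ?_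
  rw [prod_apply_updateFinset u S _ fun i => s (x i),
    prod_apply_updateFinset v T _ fun k => s (y k), Fintype.prod_sum_type, mul_smul_comm]
  congr 1
  simp only [chosenEntries, Sum.elim_inl, Sum.elim_inr, Function.comp_apply]
  ring

theorem garnirTerm_comp_ofSubtype (s : α → β → A) (S : Finset ι) (T : Finset κ) (x : ι → α)
    (y : κ → α) (u : ι → β) (v : κ → β) (h₁ : Equiv.Perm S) (h₂ : Equiv.Perm T) :
    garnirTerm s S T (x ∘ Equiv.Perm.ofSubtype h₁) (y ∘ Equiv.Perm.ofSubtype h₂) u v =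
      (Equiv.Perm.sign h₁ * Equiv.Perm.sign h₂) • garnirTerm s S T x y u v := by
  have hchosen : chosenEntries S T (x ∘ Equiv.Perm.ofSubtype h₁) (y ∘ Equiv.Perm.ofSubtype h₂) =
      chosenEntries S T x y ∘ Equiv.Perm.sumCongr h₁ h₂ := by
    ext (i | k) <;> simp [chosenEntries]
  have hS : ∏ i ∈ Sᶜ, s ((x ∘ Equiv.Perm.ofSubtype h₁) i) (u i) = ∏ i ∈ Sᶜ, s (x i) (u i) :=
    Finset.prod_congr rfl fun i hi => by
      simp [Equiv.Perm.ofSubtype_apply_of_not_mem h₁ (Finset.mem_compl.1 hi)]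
  have hT : ∏ k ∈ Tᶜ, s ((y ∘ Equiv.Perm.ofSubtype h₂) k) (v k) = ∏ k ∈ Tᶜ, s (y k) (v k) :=
    Finset.prod_congr rfl fun k hk => by
      simp [Equiv.Perm.ofSubtype_apply_of_not_mem h₂ (Finset.mem_compl.1 hk)]
  rw [garnirTerm, hS, hT, hchosen, pairDet_comp_perm_left, Equiv.Perm.sign_sumCongr, mul_smul_comm,
    garnirTerm]

theorem garnirSum_mul_pairDet_eq_sum (s : α → β → A) (S : Finset ι) (T : Finset κ)
    (x : ι → α) (y : κ → α) (u : ι → β) (v : κ → β) :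
    garnirSum (fun u' v' => pairDet s x u' * pairDet s y v') S T u v =
      ∑ g : Equiv.Perm ι × Equiv.Perm κ, (Equiv.Perm.sign g.1 * Equiv.Perm.sign g.2) •
        garnirTerm s S T (x ∘ g.1) (y ∘ g.2) u v := by
  simp only [garnirSum, pairDet_eq_sum_left, Finset.sum_mul_sum, smul_mul_smul_comm,
    ← Fintype.sum_prod_type']
  simp only [Finset.smul_sum]
  rw [Finset.sum_comm]
  refine Finset.sum_congr rfl fun g _ => ?_
  rw [← sum_sign_smul_prod_mul_prod_eq_garnirTerm, Finset.smul_sum]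
  exact Finset.sum_congr rfl fun σ _ => smul_comm _ _ _

theorem exists_garnirSum_mul_pairDet_eq (s : α → β → A) (S : Finset ι) (T : Finset κ)
    (x : ι → α) (y : κ → α) (u : ι → β) (v : κ → β) :
    ∃ E ∈ AddSubgroup.closure (Set.range fun g : Equiv.Perm ι × Equiv.Perm κ =>
        garnirTerm s S T (x ∘ g.1) (y ∘ g.2) u v),
      garnirSum (fun u' v' => pairDet s x u' * pairDet s y v') S T u v =
        Nat.card (Equiv.Perm S × Equiv.Perm T) • E := by
  classical
  let ρ : Equiv.Perm S × Equiv.Perm T →* Equiv.Perm ι × Equiv.Perm κ :=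
    Equiv.Perm.ofSubtype.prodMap Equiv.Perm.ofSubtype
  have hρ : Function.Injective ρ :=
    Equiv.Perm.ofSubtype_injective.prodMap Equiv.Perm.ofSubtype_injective
  have hcard : Nat.card ρ.range = Nat.card (Equiv.Perm S × Equiv.Perm T) :=
    (Nat.card_congr (MonoidHom.ofInjective hρ).toEquiv).symm
  rw [garnirSum_mul_pairDet_eq_sum, sum_eq_card_nsmul_sum_quotient ρ.range, hcard]
  · refine ⟨_, sum_mem fun c _ => ?_, rfl⟩
    rw [Units.smul_def]
    exact zsmul_mem (AddSubgroup.subset_closure (Set.mem_range_self c.out)) _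
  · rintro g _ ⟨⟨h₁, h₂⟩, rfl⟩
    change _ • garnirTerm s S T ((x ∘ g.1) ∘ Equiv.Perm.ofSubtype h₁)
      ((y ∘ g.2) ∘ Equiv.Perm.ofSubtype h₂) u v = _
    have hsign : Equiv.Perm.sign (g * ρ (h₁, h₂)).1 * Equiv.Perm.sign (g * ρ (h₁, h₂)).2 =
        Equiv.Perm.sign g.1 * Equiv.Perm.sign g.2 *
          (Equiv.Perm.sign h₁ * Equiv.Perm.sign h₂) := by
      simp [ρ, mul_mul_mul_comm]
    rw [garnirTerm_comp_ofSubtype, smul_smul, hsign, mul_assoc, Int.units_mul_self, mul_one]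

end PairDet

section Tableaux

variable {A : Type*} [CommRing A]

/-- The determinant attached to a double row by an arbitrary pairing `s` of its entries; `rowPoly`
is the case `s = tpair n K`. -/
def rowDet (s : ℕ → ℕ → A) (r : DRow) : A := pairDet s r.p r.q

/-- The product of the determinants of the rows of a double tableau, for an arbitrary pairing `s` of
its entries; `tabPoly` is the case `s = tpair n K`. -/
def tabDet (s : ℕ → ℕ → A) (T : List DRow) : A := (T.map (rowDet s)).prod

/-- The total length of the rows of a double tableau. -/
def tabSize (T : List DRow) : ℕ := (T.map DRow.m).sum

/-- A numerical measure of the shape of a double tableau: among shapes of the same size, it is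
increased by replacing two rows by a row longer than both and further rows. -/
def shapeWeight (T : List DRow) : ℕ := ((T.map DRow.m).map fun m => 2 ^ m - 1).sum

/-- The sum of all entries of a double tableau. -/
def entrySum (T : List DRow) : ℕ := (T.map fun r => ∑ i, r.p i + ∑ i, r.q i).sum

/-- The sum of the entries of a double tableau, weighted by the position of their half row, so that
exchanging a large entry with a smaller one in a later half row decreases it. -/
def entryWeight : List DRow → ℕ
  | [] => 0
  | r :: T => (2 * T.length + 2) * ∑ i, r.p i + (2 * T.length + 1) * ∑ i, r.q i + entryWeight T

/-- The relation decreased by the straightening algorithm: either the shape stays the same and the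
entries move to later half rows, or the shape becomes larger. -/
def Simpler (T' T : List DRow) : Prop :=
  (T'.map DRow.m = T.map DRow.m ∧ entrySum T' = entrySum T ∧ entryWeight T' < entryWeight T) ∨
    (tabSize T' = tabSize T ∧ shapeWeight T < shapeWeight T')

theorem tabDet_append (s : ℕ → ℕ → A) (T T' : List DRow) :
    tabDet s (T ++ T') = tabDet s T * tabDet s T' := by
  simp [tabDet]

theorem tabSize_append (T T' : List DRow) : tabSize (T ++ T') = tabSize T + tabSize T' := by
  simp [tabSize]

theorem shapeWeight_append (T T' : List DRow) :
    shapeWeight (T ++ T') = shapeWeight T + shapeWeight T' := by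
  simp [shapeWeight]

theorem entrySum_append (T T' : List DRow) : entrySum (T ++ T') = entrySum T + entrySum T' := by
  simp [entrySum]

theorem entryWeight_append (T T' : List DRow) :
    entryWeight (T ++ T') = entryWeight T + 2 * T'.length * entrySum T + entryWeight T' := by
  induction T with
  | nil => simp [entryWeight, entrySum]
  | cons r T ih =>
    simp only [List.cons_append, entryWeight, List.length_append, ih, entrySum, List.map_cons,
      List.sum_cons]
    ring

theorem Simpler.append_left {T' T : List DRow} (h : Simpler T' T) (C : List DRow) :
    Simpler (C ++ T') (C ++ T) := by
  rcases h with ⟨hshape, hsum, hlt⟩ | ⟨hsize, hlt⟩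
  · have hlength : T'.length = T.length := by simpa using congrArg List.length hshape
    exact .inl ⟨by simp [hshape], by simp [entrySum_append, hsum],
      by simpa [entryWeight_append, hlength] using hlt⟩
  · exact .inr ⟨by simp [tabSize_append, hsize], by simpa [shapeWeight_append] using hlt⟩

theorem Simpler.append_right {T' T : List DRow} (h : Simpler T' T) (D : List DRow) :
    Simpler (T' ++ D) (T ++ D) := by
  rcases h with ⟨hshape, hsum, hlt⟩ | ⟨hsize, hlt⟩
  · exact .inl ⟨by simp [hshape], by simp [entrySum_append, hsum],
      by simpa [entryWeight_append, hsum] using hlt⟩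
  · exact .inr ⟨by simp [tabSize_append, hsize], by simpa [shapeWeight_append] using hlt⟩

theorem shapeWeight_lt_two_pow_tabSize (T : List DRow) : shapeWeight T < 2 ^ tabSize T := by
  induction T with
  | nil => simp [shapeWeight]
  | cons r T ih =>
    obtain ⟨k, hk⟩ := Nat.exists_eq_add_of_le' (Nat.one_le_two_pow (n := r.m))
    simp only [shapeWeight, tabSize, List.map_cons, List.sum_cons, pow_add, hk,
      Nat.add_sub_cancel] at ih ⊢
    nlinarith [Nat.one_le_two_pow (n := (T.map DRow.m).sum)]

theorem wellFounded_simpler : WellFounded Simpler := by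
  refine Subrelation.wf (r := InvImage (Prod.Lex (· < ·) (· < ·))
    fun T => (2 ^ tabSize T - shapeWeight T, entryWeight T)) (fun {T' T} h => ?_)
    (InvImage.wf _ (wellFounded_lt.prod_lex wellFounded_lt))
  rcases h with ⟨hshape, -, hlt⟩ | ⟨hsize, hlt⟩
  · have hsize : tabSize T' = tabSize T := by simp only [tabSize, hshape]
    have hweight : shapeWeight T' = shapeWeight T := by simp only [shapeWeight, hshape]
    exact Prod.lex_def.2 (.inr ⟨by simp only [hsize, hweight], hlt⟩)
  · have := shapeWeight_lt_two_pow_tabSize T'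
    exact Prod.lex_def.2 (.inl (by simp only [hsize] at this ⊢; omega))

theorem tabDet_append_mem_closure_simpler {s : ℕ → ℕ → A} {T : List DRow}
    (h : tabDet s T ∈ AddSubgroup.closure (tabDet s '' {T' | Simpler T' T})) (C D : List DRow) :
    tabDet s (C ++ T ++ D) ∈ AddSubgroup.closure (tabDet s '' {T' | Simpler T' (C ++ T ++ D)}) := by
  let φ : A →+ A := (AddMonoidHom.mulRight (tabDet s D)).comp (AddMonoidHom.mulLeft (tabDet s C))
  have hφ (Z : List DRow) : φ (tabDet s Z) = tabDet s (C ++ Z ++ D) := by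
    simp only [tabDet_append]
    rfl
  rw [← hφ]
  refine (AddSubgroup.closure_le ((AddSubgroup.closure _).comap φ)).2 ?_ h
  rintro _ ⟨T', hT', rfl⟩
  exact AddSubgroup.subset_closure ⟨C ++ T' ++ D, (hT'.append_left C).append_right D, (hφ T').symm⟩

end Tableaux

section Straightening

variable {A : Type*} [CommRing A]

theorem tabDet_singleton (s : ℕ → ℕ → A) (r : DRow) : tabDet s [r] = pairDet s r.p r.q := by
  simp [tabDet, rowDet]

theorem tabDet_pair (s : ℕ → ℕ → A) (r t : DRow) :
    tabDet s [r, t] = pairDet s r.p r.q * pairDet s t.p t.q := by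
  simp [tabDet, rowDet]

theorem exists_tabDet_eq_prod {ι : Type*} (s : ℕ → ℕ → A) (S : Finset ι) (x u : ι → ℕ) :
    ∃ L, tabSize L = S.card ∧ tabDet s L = ∏ i ∈ S, s (x i) (u i) := by
  refine ⟨S.toList.map fun i => ⟨1, fun _ => x i, fun _ => u i⟩,
    by simp [tabSize, Function.comp_def], ?_⟩
  simp [tabDet, rowDet, pairDet, Function.comp_def, Finset.prod_map_toList]

theorem exists_tabDet_eq_garnirTerm {ι κ : Type*} [Fintype ι] [DecidableEq ι] [Fintype κ]
    [DecidableEq κ] (s : ℕ → ℕ → A) (S : Finset ι) (T : Finset κ) (x u : ι → ℕ) (y v : κ → ℕ) :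
    ∃ r L, r.m = S.card + T.card ∧ tabSize (r :: L) = Fintype.card ι + Fintype.card κ ∧
      tabDet s (r :: L) = garnirTerm s S T x y u v := by
  obtain ⟨L, hL, hLdet⟩ := exists_tabDet_eq_prod s Sᶜ x u
  obtain ⟨L', hL', hL'det⟩ := exists_tabDet_eq_prod s Tᶜ y v
  let e : Fin (S.card + T.card) ≃ S ⊕ T := (Fintype.equivFinOfCardEq (by simp)).symm
  let r : DRow := ⟨S.card + T.card, chosenEntries S T x y ∘ e, chosenEntries S T u v ∘ e⟩
  refine ⟨r, L ++ L', rfl, ?_, ?_⟩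
  · have hS := S.card_add_card_compl
    have hT := T.card_add_card_compl
    calc tabSize (r :: (L ++ L')) = S.card + T.card + (tabSize L + tabSize L') := by
          simp [tabSize, r]
      _ = Fintype.card ι + Fintype.card κ := by omega
  · calc tabDet s (r :: (L ++ L'))
      _ = pairDet s (chosenEntries S T x y ∘ e) (chosenEntries S T u v ∘ e) *
          (tabDet s L * tabDet s L') := by simp [tabDet, rowDet, r]
      _ = garnirTerm s S T x y u v := by
        rw [pairDet_comp_equiv, hLdet, hL'det, mul_comm, garnirTerm]

theorem simpler_singleton {m : ℕ} {p q p' q' : Fin m → ℕ} (hlt : ∑ i, p' i < ∑ i, p i)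
    (hsum : ∑ i, q' i + ∑ i, p' i = ∑ i, q i + ∑ i, p i) :
    Simpler [⟨m, p', q'⟩] [⟨m, p, q⟩] := by
  refine .inl ⟨rfl, ?_, ?_⟩
  · simp only [entrySum, List.map_cons, List.map_nil, List.sum_cons, List.sum_nil]
    omega
  · simp only [entryWeight, List.length_nil]
    omega

theorem simpler_pair_of_sum_lt {m m' : ℕ} {p q q₁ : Fin m → ℕ} {p' q' p₁ : Fin m' → ℕ}
    (hlt : ∑ i, q₁ i < ∑ i, q i) (hsum : ∑ i, p₁ i + ∑ i, q₁ i = ∑ i, p' i + ∑ i, q i) :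
    Simpler [⟨m, p, q₁⟩, ⟨m', p₁, q'⟩] [⟨m, p, q⟩, ⟨m', p', q'⟩] := by
  refine .inl ⟨rfl, ?_, ?_⟩
  · simp only [entrySum, List.map_cons, List.map_nil, List.sum_cons, List.sum_nil]
    omega
  · simp only [entryWeight, List.length_cons, List.length_nil]
    omega

theorem simpler_pair_of_lt {r t l : DRow} {L : List DRow} (hle : t.m ≤ r.m) (hlt : r.m < l.m)
    (hsize : tabSize (l :: L) = r.m + t.m) : Simpler (l :: L) [r, t] := by
  refine .inr ⟨by simpa [tabSize] using hsize, ?_⟩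
  have ht : 2 ^ t.m ≤ 2 ^ r.m := Nat.pow_le_pow_right two_pos hle
  have hl : 2 ^ (r.m + 1) ≤ 2 ^ l.m := Nat.pow_le_pow_right two_pos hlt
  have hpos : 1 ≤ 2 ^ t.m := Nat.one_le_two_pow
  simp only [shapeWeight, List.map_cons, List.map_nil, List.sum_cons, List.sum_nil]
  omega

variable [IsAddTorsionFree A] {s : ℕ → ℕ → A}

theorem tabDet_singleton_mem_closure_simpler (hs : ∀ i j, s i j = s j i) {r : DRow}
    (hp : Monotone r.p) (hq : Monotone r.q) {j : Fin r.m} (hj : r.q j < r.p j) :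
    tabDet s [r] ∈ AddSubgroup.closure (tabDet s '' {T | Simpler T [r]}) := by
  have hcard : Fintype.card (Fin r.m) < (Finset.Iic j).card + (Finset.Ici j).card := by
    simp only [Fintype.card_fin, Fin.card_Iic, Fin.card_Ici]
    omega
  have hmem := sub_mem_closure_of_garnirSum_eq (fun u v τ => pairDet_comp_perm_left s u v τ)
    (fun u v τ => pairDet_comp_perm_right s u v τ) (S := Finset.Iic j) (T := Finset.Ici j)
    (fun i hi => hq (Finset.mem_Iic.1 hi)) (fun k hk => hj.trans_le (hp (Finset.mem_Ici.1 hk)))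
    (E := 0) (by rw [garnirSum_pairDet_eq_zero hs hcard, smul_zero])
  rw [zero_sub, neg_mem_iff] at hmem
  rw [tabDet_singleton, pairDet_comm hs]
  refine AddSubgroup.closure_mono ?_ hmem
  rintro _ ⟨q', p', hlt, hsum, rfl⟩
  exact ⟨[⟨r.m, p', q'⟩], simpler_singleton hlt hsum,
    by rw [tabDet_singleton, pairDet_comm hs]⟩

theorem tabDet_pair_mem_closure_simpler (hs : ∀ i j, s i j = s j i) {r t : DRow}
    (hle : t.m ≤ r.m) (hq : Monotone r.q) (hp : Monotone t.p) {j : Fin t.m}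
    (hj : t.p j < r.q (j.castLE hle)) :
    tabDet s [r, t] ∈ AddSubgroup.closure (tabDet s '' {T | Simpler T [r, t]}) := by
  let S : Finset (Fin t.m) := Finset.Iic j
  let T : Finset (Fin r.m) := Finset.Ici (j.castLE hle)
  have hcard : S.card + T.card = r.m + 1 := by
    simp only [S, T, Fin.card_Iic, Fin.card_Ici, Fin.val_castLE]
    omega
  have hdet (p' : Fin t.m → ℕ) (q' : Fin r.m → ℕ) : tabDet s [⟨r.m, r.p, q'⟩, ⟨t.m, p', t.q⟩] =
      pairDet s t.q p' * pairDet s r.p q' := by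
    rw [tabDet_pair, pairDet_comm hs p', mul_comm]
  obtain ⟨E, hE, hsum⟩ := exists_garnirSum_mul_pairDet_eq s S T t.q r.p t.p r.q
  have hE' : E ∈ AddSubgroup.closure (tabDet s '' {T | Simpler T [r, t]}) := by
    refine AddSubgroup.closure_mono ?_ hE
    rintro _ ⟨g, rfl⟩
    obtain ⟨l, L, hl, hsize, hL⟩ :=
      exists_tabDet_eq_garnirTerm s S T (t.q ∘ g.1) t.p (r.p ∘ g.2) r.q
    refine ⟨l :: L, simpler_pair_of_lt hle (by omega) ?_, hL⟩
    rw [hsize, Fintype.card_fin, Fintype.card_fin, add_comm]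
  have hsub := sub_mem_closure_of_garnirSum_eq
    (Φ := fun (u : Fin t.m → ℕ) (v : Fin r.m → ℕ) => pairDet s t.q u * pairDet s r.p v)
    (fun u v τ => by rw [pairDet_comp_perm_right, smul_mul_assoc])
    (fun u v τ => by rw [pairDet_comp_perm_right, mul_smul_comm])
    (fun i hi => hp (Finset.mem_Iic.1 hi)) (fun k hk => hj.trans_le (hq (Finset.mem_Ici.1 hk))) hsum
  have hsub' : E - tabDet s [r, t] ∈ AddSubgroup.closure (tabDet s '' {T | Simpler T [r, t]}) := by
    rw [hdet t.p r.q]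
    refine AddSubgroup.closure_mono ?_ hsub
    rintro _ ⟨p', q', hlt, hsum', rfl⟩
    exact ⟨_, simpler_pair_of_sum_lt hlt hsum', hdet p' q'⟩
  simpa using sub_mem hE' hsub'

end Straightening

section Normalization

variable {A : Type*} [CommRing A]

theorem pairDet_eq_zero_of_not_injective_left {ι α β : Type*} [Fintype ι] [DecidableEq ι]
    (s : α → β → A) {p : ι → α} (q : ι → β) (hp : ¬ Function.Injective p) : pairDet s p q = 0 := by
  obtain ⟨i, j, hij, hne⟩ := Function.not_injective_iff.1 hp
  exact Matrix.det_zero_of_row_eq hne (by ext b; simp [hij])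

theorem pairDet_eq_zero_of_not_injective_right {ι α β : Type*} [Fintype ι] [DecidableEq ι]
    (s : α → β → A) (p : ι → α) {q : ι → β} (hq : ¬ Function.Injective q) : pairDet s p q = 0 := by
  rw [← pairDet_swap, pairDet_eq_zero_of_not_injective_left _ _ hq]

theorem rowDet_eq_zero_or_exists_strictMono (s : ℕ → ℕ → A) (r : DRow) :
    rowDet s r = 0 ∨ ∃ (p q : Fin r.m → ℕ) (ε : ℤˣ), StrictMono p ∧ StrictMono q ∧
      ∑ i, p i = ∑ i, r.p i ∧ ∑ i, q i = ∑ i, r.q i ∧ rowDet s r = ε • rowDet s ⟨r.m, p, q⟩ := by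
  by_cases hp : Function.Injective r.p
  · by_cases hq : Function.Injective r.q
    · refine .inr ⟨r.p ∘ Tuple.sort r.p, r.q ∘ Tuple.sort r.q,
        Equiv.Perm.sign (Tuple.sort r.q) * Equiv.Perm.sign (Tuple.sort r.p),
        (Tuple.monotone_sort r.p).strictMono_of_injective (hp.comp (Equiv.injective _)),
        (Tuple.monotone_sort r.q).strictMono_of_injective (hq.comp (Equiv.injective _)),
        Equiv.sum_comp _ r.p, Equiv.sum_comp _ r.q, ?_⟩
      simp only [rowDet, pairDet_comp_perm_left, pairDet_comp_perm_right, smul_smul]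
      rw [mul_mul_mul_comm, Int.units_mul_self, Int.units_mul_self, one_mul, one_smul]
    · exact .inl (pairDet_eq_zero_of_not_injective_right s _ hq)
  · exact .inl (pairDet_eq_zero_of_not_injective_left s _ hp)

theorem tabDet_eq_zero_or_exists_strictMono (s : ℕ → ℕ → A) (T : List DRow) :
    tabDet s T = 0 ∨ ∃ (T' : List DRow) (ε : ℤˣ), (∀ r ∈ T', StrictMono r.p ∧ StrictMono r.q) ∧
      T'.map DRow.m = T.map DRow.m ∧ entrySum T' = entrySum T ∧ entryWeight T' = entryWeight T ∧
      tabDet s T = ε • tabDet s T' := by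
  induction T with
  | nil => exact .inr ⟨[], 1, by simp⟩
  | cons r T ih =>
    have hcons (Z : List DRow) (r : DRow) : tabDet s (r :: Z) = rowDet s r * tabDet s Z := by
      simp [tabDet]
    rcases ih with h | ⟨T', ε, hmono, hshape, hsum, hweight, hdet⟩
    · exact .inl (by rw [hcons, h, mul_zero])
    rcases rowDet_eq_zero_or_exists_strictMono s r with h | ⟨p, q, δ, hp, hq, hps, hqs, hrow⟩
    · exact .inl (by rw [hcons, h, zero_mul])
    have hlength : T'.length = T.length := by simpa using congrArg List.length hshape
    refine .inr ⟨⟨r.m, p, q⟩ :: T', δ * ε, List.forall_mem_cons.2 ⟨⟨hp, hq⟩, hmono⟩,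
      by simp [hshape], ?_, ?_, ?_⟩
    · simp only [entrySum, List.map_cons, List.sum_cons, hps, hqs] at hsum ⊢
      rw [hsum]
    · simp only [entryWeight, hlength, hps, hqs, hweight]
    · rw [hcons, hcons, hrow, hdet, smul_mul_smul_comm]

/-- The row lengths of a double tableau form a partition. -/
def HasPartitionShape (T : List DRow) : Prop :=
  T.IsChain (fun r t => t.m ≤ r.m) ∧ ∀ r ∈ T, 1 ≤ r.m

theorem HasPartitionShape.of_map_eq {T T' : List DRow} (hT : HasPartitionShape T)
    (h : T'.map DRow.m = T.map DRow.m) : HasPartitionShape T' := by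
  have hchain := (List.isChain_map DRow.m (R := fun a b => b ≤ a)).2 hT.1
  have hpos : ∀ m ∈ T.map DRow.m, 1 ≤ m := List.forall_mem_map.2 hT.2
  rw [← h] at hchain hpos
  exact ⟨(List.isChain_map _).1 hchain, List.forall_mem_map.1 hpos⟩

@[to_additive]
theorem prod_map_filter_of_eq_one {α N : Type*} [Monoid N] (l : List α) (p : α → Prop)
    [DecidablePred p] (f : α → N) (hf : ∀ a, ¬ p a → f a = 1) :
    ((l.filter p).map f).prod = (l.map f).prod := by
  induction l with
  | nil => rfl
  | cons a l ih => by_cases ha : p a <;> simp [ha, ih, hf]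

theorem exists_hasPartitionShape (s : ℕ → ℕ → A) (T : List DRow) :
    ∃ T', HasPartitionShape T' ∧ tabSize T' = tabSize T ∧ shapeWeight T' = shapeWeight T ∧
      tabDet s T' = tabDet s T := by
  let R (r t : DRow) : Prop := t.m ≤ r.m
  have : Std.Total R := ⟨fun r t => Nat.le_total t.m r.m⟩
  have : IsTrans DRow R := ⟨fun _ _ _ h h' => h'.trans h⟩
  let T₁ := T.filter fun r => 1 ≤ r.m
  have hperm : (T₁.insertionSort R).Perm T₁ := List.perm_insertionSort R T₁
  refine ⟨T₁.insertionSort R, ⟨(List.pairwise_insertionSort R T₁).isChain, fun r hr => ?_⟩,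
    ?_, ?_, ?_⟩
  · simpa [T₁] using (List.mem_filter.1 (hperm.mem_iff.1 hr)).2
  · exact (hperm.map _).sum_eq.trans (sum_map_filter_of_eq_zero T _ _ fun r hr => by omega)
  · simp only [shapeWeight, List.map_map]
    refine (hperm.map _).sum_eq.trans (sum_map_filter_of_eq_zero T _ _ fun r hr => ?_)
    simp [Nat.lt_one_iff.1 (not_le.1 hr)]
  · refine (hperm.map _).prod_eq.trans (prod_map_filter_of_eq_one T _ _ fun r hr => ?_)
    have : IsEmpty (Fin r.m) := ⟨fun i => hr i.pos⟩
    exact Matrix.det_isEmpty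

theorem Simpler.exists_hasPartitionShape {T T' : List DRow} (h : Simpler T' T)
    (hT : HasPartitionShape T) (s : ℕ → ℕ → A) :
    ∃ T'', HasPartitionShape T'' ∧ Simpler T'' T ∧ tabDet s T'' = tabDet s T' := by
  rcases h with hsame | ⟨hsize, hlt⟩
  · exact ⟨T', hT.of_map_eq hsame.1, .inl hsame, rfl⟩
  · obtain ⟨T'', hT'', hsize', hweight, hdet⟩ := _root_.exists_hasPartitionShape s T'
    exact ⟨T'', hT'', .inr ⟨hsize'.trans hsize, hweight ▸ hlt⟩, hdet⟩

end Normalization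

section StandardSpanning

variable {A : Type*} [CommRing A]

theorem tabDet_mem_closure_simpler_of_not_doublyStandard [IsAddTorsionFree A] {s : ℕ → ℕ → A}
    (hs : ∀ i j, s i j = s j i) {T : List DRow} (hlen : T.IsChain fun r t => t.m ≤ r.m)
    (hmono : ∀ r ∈ T, StrictMono r.p ∧ StrictMono r.q) (hT : ¬ DoublyStandard T) :
    tabDet s T ∈ AddSubgroup.closure (tabDet s '' {T' | Simpler T' T}) := by
  by_cases hrow : ∀ r ∈ T, ∀ j, r.p j ≤ r.q j
  · have hchain : ¬ T.IsChain _ := fun h => hT ⟨hlen, hmono, hrow, h⟩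
    rw [List.isChain_iff_forall_rel_of_append_cons_cons] at hlen hchain
    push Not at hchain
    obtain ⟨r, t, C, D, rfl, j, _, hlt⟩ := hchain
    have hpair := tabDet_pair_mem_closure_simpler hs (hlen rfl) (hmono r (by simp)).2.monotone
      (hmono t (by simp)).1.monotone hlt
    simpa using tabDet_append_mem_closure_simpler hpair C D
  · push Not at hrow
    obtain ⟨r, hr, j, hlt⟩ := hrow
    obtain ⟨C, D, rfl⟩ := List.append_of_mem hr
    have hsingle := tabDet_singleton_mem_closure_simpler hs (hmono r hr).1.monotone
      (hmono r hr).2.monotone hlt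
    simpa using tabDet_append_mem_closure_simpler hsingle C D

theorem tabDet_mem_closure_doublyStandard_of_hasPartitionShape [IsAddTorsionFree A]
    {s : ℕ → ℕ → A} (hs : ∀ i j, s i j = s j i) (T : List DRow) (hT : HasPartitionShape T) :
    tabDet s T ∈ AddSubgroup.closure
      (tabDet s '' {T | DoublyStandard T ∧ ∀ r ∈ T, 1 ≤ r.m}) := by
  induction T using wellFounded_simpler.induction with
  | _ T ih =>
  rcases tabDet_eq_zero_or_exists_strictMono s T with h |
    ⟨T₁, ε, hmono, hshape, hsum, hweight, hdet⟩
  · exact h ▸ zero_mem _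
  have hT₁ : HasPartitionShape T₁ := hT.of_map_eq hshape
  rw [hdet, Units.smul_def]
  refine zsmul_mem ?_ _
  by_cases hstd : DoublyStandard T₁
  · exact AddSubgroup.subset_closure ⟨T₁, ⟨hstd, hT₁.2⟩, rfl⟩
  · refine (AddSubgroup.closure_le _).2 ?_
      (tabDet_mem_closure_simpler_of_not_doublyStandard hs hT₁.1 hmono hstd)
    rintro _ ⟨T', hT', rfl⟩
    have hT'' : Simpler T' T := by
      simpa only [Simpler, tabSize, shapeWeight, hshape, hsum, hweight, Set.mem_ofPred_eq] using hT'
    obtain ⟨T₂, hT₂, hsimpler, hdet₂⟩ := hT''.exists_hasPartitionShape hT s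
    exact hdet₂ ▸ ih T₂ hsimpler hT₂

theorem map_tabDet {B : Type*} [CommRing B] (φ : A →+* B) (s : ℕ → ℕ → A) (T : List DRow) :
    φ (tabDet s T) = tabDet (fun i j => φ (s i j)) T := by
  rw [tabDet, map_list_prod, List.map_map, tabDet]
  exact congrArg (fun f => (T.map f).prod) (funext fun r => φ.map_det _)

-- The straightening relations are divisible by factorials; these are cancelled for the generic
-- symmetric pairing, whose values lie in a torsion-free ring.
theorem tabDet_mem_closure_doublyStandard {s : ℕ → ℕ → A} (hs : ∀ i j, s i j = s j i)
    (T : List DRow) :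
    tabDet s T ∈ AddSubgroup.closure
      (tabDet s '' {T | DoublyStandard T ∧ ∀ r ∈ T, 1 ≤ r.m}) := by
  let g (i j : ℕ) : MvPolynomial (Sym2 ℕ) ℤ := X s(i, j)
  let φ : MvPolynomial (Sym2 ℕ) ℤ →+* A := eval₂Hom (Int.castRingHom A) (Sym2.lift ⟨s, hs⟩)
  have hg (i j : ℕ) : g i j = g j i := congrArg X Sym2.eq_swap
  have hφ (T : List DRow) : φ (tabDet g T) = tabDet s T := by simp [map_tabDet, φ, g]
  obtain ⟨T', hT', -, -, hdet⟩ := exists_hasPartitionShape g T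
  have hmem := AddSubgroup.mem_map_of_mem (φ : MvPolynomial (Sym2 ℕ) ℤ →+ A)
    (tabDet_mem_closure_doublyStandard_of_hasPartitionShape hg T' hT')
  rw [AddMonoidHom.map_closure, Set.image_image, hdet] at hmem
  simpa only [AddMonoidHom.coe_coe, hφ] using hmem

end StandardSpanning

section SupDegree

open AddMonoidAlgebra

theorem linearIndependent_of_injective_supDegree {R A B ι : Type*} [CommRing R] [IsDomain R]
    [AddZeroClass A] [LinearOrder B] [OrderBot B] {D : A → B} {f : ι → AddMonoidAlgebra R A}
    (hf : ∀ i, f i ≠ 0) (hinj : Function.Injective fun i => (f i).supDegree D) :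
    LinearIndependent R f := by
  classical
  rw [linearIndependent_iff']
  intro s g hg
  by_contra! h
  obtain ⟨i, hi, hgi⟩ := h
  have hsmul {c : R} (hc : c ≠ 0) (x : AddMonoidAlgebra R A) :
      (c • x).supDegree D = x.supDegree D := by
    simp only [supDegree, AddMonoidAlgebra.coeff_smul, Finsupp.support_smul_eq hc]
  refine sum_ne_zero_of_injOn_supDegree (D := D) (s := s.filter fun i => g i ≠ 0)
    (f := fun i => g i • f i) ⟨i, Finset.mem_filter.2 ⟨hi, hgi⟩⟩ (fun j hj => ?_)
    (fun j hj k hk hjk => ?_) ?_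
  · exact smul_ne_zero (Finset.mem_filter.1 hj).2 (hf j)
  · simp only [Function.comp_apply, hsmul (Finset.mem_filter.1 hj).2,
      hsmul (Finset.mem_filter.1 hk).2] at hjk
    exact hinj hjk
  · rw [Finset.sum_filter_of_ne fun j _ hj => left_ne_zero_of_smul hj, hg]

/-- The lexicographic order on exponents for which the variable `t_{ik}` is larger the earlier
`(i, k)` comes lexicographically. -/
noncomputable def lexExponent (n : ℕ) : ((ℕ × Fin n) →₀ ℕ) ≃+ Lex ((ℕ ×ₗ Fin n) →₀ ℕ) :=
  (Finsupp.domCongr toLex).trans (toLexAddEquiv _)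

/-- The exponent of the monomial `∏ b, t_{p b, κ b}`. -/
noncomputable def pairExponent {n m : ℕ} (p : Fin m → ℕ) (κ : Fin m → Fin n) :
    (ℕ × Fin n) →₀ ℕ :=
  ∑ b, Finsupp.single (p b, κ b) 1

theorem ofLex_lexExponent {n : ℕ} (e : (ℕ × Fin n) →₀ ℕ) (x : ℕ ×ₗ Fin n) :
    ofLex (lexExponent n e) x = e (ofLex x) :=
  rfl

theorem pairExponent_apply {n m : ℕ} {p : Fin m → ℕ} (hp : Function.Injective p)
    (κ : Fin m → Fin n) (b : Fin m) (k : Fin n) :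
    pairExponent p κ (p b, k) = if κ b = k then 1 else 0 := by
  simp only [pairExponent, Finsupp.finsetSum_apply, Finsupp.single_apply, Prod.mk.injEq]
  rw [Finset.sum_eq_single b (fun c _ hcb => if_neg fun h => hcb (hp h.1)) (by simp)]
  simp only [true_and]

theorem pairExponent_congr {n m : ℕ} {p : Fin m → ℕ} {κ κ' : Fin m → Fin n} {i : ℕ}
    (h : ∀ b, p b = i → κ b = κ' b) (k : Fin n) :
    pairExponent p κ (i, k) = pairExponent p κ' (i, k) := by
  simp only [pairExponent, Finsupp.finsetSum_apply, Finsupp.single_apply, Prod.mk.injEq]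
  refine Finset.sum_congr rfl fun b _ => if_congr (and_congr_right fun hb => ?_) rfl rfl
  rw [h b hb]

theorem exists_castLE_lt_of_ne {n m : ℕ} (h : m ≤ n) {f : Fin m → Fin n}
    (hf : Function.Injective f) (hne : f ≠ Fin.castLE h) :
    ∃ a, Fin.castLE h a < f a ∧ ∀ b < a, f b = Fin.castLE h b := by
  obtain ⟨a, ha, hmin⟩ :=
    wellFounded_lt.has_min {a | f a ≠ Fin.castLE h a} (Function.ne_iff.1 hne)
  have heq {b : Fin m} (hb : b < a) : f b = Fin.castLE h b := by_contra fun hfb => hmin b hfb hb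
  refine ⟨a, lt_of_le_of_ne (le_of_not_gt fun hlt => ?_) (Ne.symm ha), fun b => heq⟩
  have hb : (⟨f a, lt_trans hlt a.2⟩ : Fin m) < a := hlt
  exact hb.ne (hf (heq hb))

theorem lexExponent_pairExponent_lt {n m : ℕ} (h : m ≤ n) {p : Fin m → ℕ} (hp : StrictMono p)
    {f : Fin m → Fin n} (hf : Function.Injective f) (hne : f ≠ Fin.castLE h) :
    lexExponent n (pairExponent p f) < lexExponent n (pairExponent p (Fin.castLE h)) := by
  obtain ⟨a, hlt, heq⟩ := exists_castLE_lt_of_ne h hf hne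
  refine Finsupp.Lex.lt_iff.2 ⟨toLex (p a, Fin.castLE h a), fun x hx => ?_, ?_⟩
  · obtain ⟨⟨i, k⟩, rfl⟩ := toLex.surjective x
    simp only [ofLex_lexExponent, ofLex_toLex]
    rcases Prod.Lex.toLex_lt_toLex.1 hx with hi | ⟨rfl, hk⟩
    · exact pairExponent_congr (fun b hb => heq b (hp.lt_iff_lt.1 (hb.trans_lt hi))) k
    · rw [pairExponent_apply hp.injective, pairExponent_apply hp.injective,
        if_neg (hk.trans hlt).ne', if_neg hk.ne']
  · simp only [ofLex_lexExponent, ofLex_toLex, pairExponent_apply hp.injective, if_neg hlt.ne',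
      if_true, zero_lt_one]

theorem lexExponent_pairExponent_le {n m : ℕ} (h : m ≤ n) {p : Fin m → ℕ} (hp : StrictMono p)
    {f : Fin m → Fin n} (hf : Function.Injective f) :
    lexExponent n (pairExponent p f) ≤ lexExponent n (pairExponent p (Fin.castLE h)) := by
  rcases eq_or_ne f (Fin.castLE h) with rfl | hne
  · exact le_rfl
  · exact (lexExponent_pairExponent_lt h hp hf hne).le

theorem pairDet_sum_mul {ι α β γ A : Type*} [Fintype ι] [DecidableEq ι] [Fintype γ]
    [CommRing A] (x : α → γ → A) (y : β → γ → A) (p : ι → α) (q : ι → β) :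
    pairDet (fun i j => ∑ k, x i k * y j k) p q =
      ∑ κ : ι → γ, pairDet x p κ * ∏ b, y (q b) (κ b) := by
  classical
  simp only [pairDet_eq_sum_left, Finset.prod_univ_sum, Fintype.piFinset_univ, Finset.smul_sum,
    Finset.sum_mul, Finset.prod_mul_distrib, smul_mul_assoc]
  exact Finset.sum_comm

theorem prod_X_eq_monomial_pairExponent (K : Type*) [CommSemiring K] {n m : ℕ} (p : Fin m → ℕ)
    (κ : Fin m → Fin n) :
    ∏ b, (X (p b, κ b) : MvPolynomial (ℕ × Fin n) K) = monomial (pairExponent p κ) 1 := by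
  simp only [X, pairExponent, monomial_sum_one]

theorem rowPoly_eq_sum_pairDet (n : ℕ) (K : Type*) [Field K] (r : DRow) :
    rowPoly n K r = ∑ κ : Fin r.m → Fin n with Function.Injective κ,
      pairDet (fun i k => X (i, k)) r.p κ * ∏ b, X (r.q b, κ b) := by
  rw [Finset.sum_filter_of_ne fun κ _ h => by_contra fun hκ =>
    h (by rw [pairDet_eq_zero_of_not_injective_right _ _ hκ, zero_mul])]
  exact pairDet_sum_mul (fun i k => X (i, k)) (fun j k => X (j, k)) r.p r.q

theorem rowPoly_eq_zero_of_lt {n : ℕ} (K : Type*) [Field K] {r : DRow} (h : n < r.m) :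
    rowPoly n K r = 0 := by
  rw [rowPoly_eq_sum_pairDet, Finset.filter_false_of_mem, Finset.sum_empty]
  intro κ _ hκ
  exact h.not_ge (by simpa using Fintype.card_le_of_injective κ hκ)

theorem rowPoly_eq_sum_monomial (n : ℕ) (K : Type*) [Field K] (r : DRow) :
    rowPoly n K r = ∑ x ∈ (Finset.univ.filter Function.Injective) ×ˢ
        (Finset.univ : Finset (Equiv.Perm (Fin r.m))),
      monomial (pairExponent r.p (x.1 ∘ x.2) + pairExponent r.q x.1)
        ((Equiv.Perm.sign x.2 : ℤ) : K) := by
  rw [rowPoly_eq_sum_pairDet, Finset.sum_product]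
  refine Finset.sum_congr rfl fun κ _ => ?_
  rw [pairDet_eq_sum_right, Finset.sum_mul]
  refine Finset.sum_congr rfl fun τ _ => ?_
  rw [prod_X_eq_monomial_pairExponent, prod_X_eq_monomial_pairExponent, smul_mul_assoc,
    monomial_mul, mul_one, Units.smul_def, ← map_zsmul, zsmul_one]
  rfl

/-- The polynomial `f` has the lexicographically leading monomial `t ^ e`, with coefficient 1. -/
def HasLeadingExponent {n : ℕ} {K : Type*} [Field K] (f : MvPolynomial (ℕ × Fin n) K)
    (e : (ℕ × Fin n) →₀ ℕ) : Prop :=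
  f.Monic (lexExponent n) ∧ f.supDegree (lexExponent n) = lexExponent n e

theorem hasLeadingExponent_one (n : ℕ) (K : Type*) [Field K] :
    HasLeadingExponent (1 : MvPolynomial (ℕ × Fin n) K) 0 :=
  ⟨monic_one (lexExponent n).injective, supDegree_single_ne_zero _ one_ne_zero⟩

theorem HasLeadingExponent.mul {n : ℕ} {K : Type*} [Field K] {f g : MvPolynomial (ℕ × Fin n) K}
    {e e' : (ℕ × Fin n) →₀ ℕ} (hf : HasLeadingExponent f e) (hg : HasLeadingExponent g e') :
    HasLeadingExponent (f * g) (e + e') := by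
  refine ⟨hf.1.mul (lexExponent n).injective (map_add _) hg.1, ?_⟩
  rw [hf.1.supDegree_mul (lexExponent n).injective (map_add _) (add_zero _) hg.1, hf.2, hg.2,
    map_add]

theorem hasLeadingExponent_sum_monomial {n : ℕ} {K ι : Type*} [Field K] {s : Finset ι}
    {e : ι → (ℕ × Fin n) →₀ ℕ} {c : ι → K} {i : ι} (hi : i ∈ s) (hc : c i = 1)
    (hlt : ∀ j ∈ s, j ≠ i → lexExponent n (e j) < lexExponent n (e i)) :
    HasLeadingExponent (∑ j ∈ s, monomial (e j) (c j)) (e i) := by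
  have hei : (monomial (e i) (c i)).supDegree (lexExponent n) = lexExponent n (e i) :=
    supDegree_single_ne_zero _ (hc ▸ one_ne_zero)
  obtain ⟨hsup, hlead⟩ := supDegree_leadingCoeff_sum_eq (D := lexExponent n)
    (f := fun j => monomial (e j) (c j)) hi fun j hj hji => by
      rw [hei]
      rcases eq_or_ne (c j) 0 with hcj | hcj
      · rw [hcj, map_zero, supDegree_zero]
        exact bot_le.trans_lt (hlt j hj hji)
      · exact (supDegree_single_ne_zero _ hcj).trans_lt (hlt j hj hji)
  exact ⟨hlead.trans ((leadingCoeff_single (lexExponent n).injective _ _).trans hc),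
    hsup.trans hei⟩

theorem rowPoly_hasLeadingExponent {n : ℕ} (K : Type*) [Field K] {r : DRow} (h : r.m ≤ n)
    (hp : StrictMono r.p) (hq : StrictMono r.q) :
    HasLeadingExponent (rowPoly n K r)
      (pairExponent r.p (Fin.castLE h) + pairExponent r.q (Fin.castLE h)) := by
  let e (x : (Fin r.m → Fin n) × Equiv.Perm (Fin r.m)) : (ℕ × Fin n) →₀ ℕ :=
    pairExponent r.p (x.1 ∘ x.2) + pairExponent r.q x.1
  rw [rowPoly_eq_sum_monomial]
  change HasLeadingExponent _ (e (Fin.castLE h, 1))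
  refine hasLeadingExponent_sum_monomial (e := e)
    (by simpa using Fin.castLE_injective h) (by simp) fun ⟨κ, τ⟩ hx hne => ?_
  have hκ : Function.Injective κ := by simpa using hx
  simp only [e, map_add]
  rcases eq_or_ne κ (Fin.castLE h) with rfl | hκ'
  · have hτ : Fin.castLE h ∘ τ ≠ Fin.castLE h := fun hτ =>
      hne (by rw [show τ = 1 from Equiv.ext fun b => hκ (congrFun hτ b)])
    exact add_lt_add_of_lt_of_le (lexExponent_pairExponent_lt h hp (hκ.comp τ.injective) hτ) le_rfl
  · exact add_lt_add_of_le_of_lt (lexExponent_pairExponent_le h hp (hκ.comp τ.injective))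
      (lexExponent_pairExponent_lt h hq hκ hκ')

end SupDegree

section Columns

/-- The column `p₁ₖ, q₁ₖ, p₂ₖ, q₂ₖ, …` of a double tableau, read downwards; the index `k` starts
from `0`. -/
def tabColumn (k : ℕ) (T : List DRow) : List ℕ :=
  T.flatMap fun r => if h : k < r.m then [r.p ⟨k, h⟩, r.q ⟨k, h⟩] else []

theorem tabColumn_cons_of_lt {k : ℕ} {r : DRow} (h : k < r.m) (T : List DRow) :
    tabColumn k (r :: T) = r.p ⟨k, h⟩ :: r.q ⟨k, h⟩ :: tabColumn k T := by
  simp only [tabColumn, List.flatMap_cons, dif_pos h, List.cons_append, List.nil_append]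

theorem tabColumn_cons_of_le {k : ℕ} {r : DRow} (h : r.m ≤ k) (T : List DRow) :
    tabColumn k (r :: T) = tabColumn k T := by
  simp only [tabColumn, List.flatMap_cons, dif_neg h.not_gt, List.nil_append]

theorem DoublyStandard.tail {r : DRow} {T : List DRow} (h : DoublyStandard (r :: T)) :
    DoublyStandard T :=
  ⟨h.1.tail, fun s hs => h.2.1 s (List.mem_cons_of_mem r hs),
    fun s hs => h.2.2.1 s (List.mem_cons_of_mem r hs), h.2.2.2.tail⟩

theorem DoublyStandard.tabColumn_eq_nil_iff {r : DRow} {T : List DRow}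
    (h : DoublyStandard (r :: T)) {k : ℕ} : tabColumn k (r :: T) = [] ↔ r.m ≤ k := by
  induction T generalizing r with
  | nil => simp [tabColumn]
  | cons s T ih =>
    rcases lt_or_ge k r.m with hk | hk
    · simp [tabColumn_cons_of_lt hk, hk]
    · rw [tabColumn_cons_of_le hk, ih h.tail]
      exact iff_of_true ((List.isChain_cons_cons.1 h.1).1.trans hk) hk

theorem DoublyStandard.le_of_mem_tabColumn_tail {r : DRow} {T : List DRow}
    (h : DoublyStandard (r :: T)) (hT : ∀ k, (tabColumn k T).Pairwise (· ≤ ·)) {k : ℕ}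
    (hk : k < r.m) {x : ℕ} (hx : x ∈ tabColumn k T) : r.q ⟨k, hk⟩ ≤ x := by
  cases T with
  | nil => simp [tabColumn] at hx
  | cons s T =>
    have hks : k < s.m := lt_of_not_ge fun hle =>
      List.ne_nil_of_mem hx (h.tail.tabColumn_eq_nil_iff.2 hle)
    have hrs : r.q ⟨k, hk⟩ ≤ s.p ⟨k, hks⟩ := (List.isChain_cons_cons.1 h.2.2.2).1 ⟨k, hks⟩ hk
    have hsorted := hT k
    rw [tabColumn_cons_of_lt hks] at hx hsorted
    rcases List.mem_cons.1 hx with rfl | hx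
    · exact hrs
    · exact hrs.trans ((List.pairwise_cons.1 hsorted).1 x hx)

theorem DoublyStandard.pairwise_tabColumn {T : List DRow} (h : DoublyStandard T) (k : ℕ) :
    (tabColumn k T).Pairwise (· ≤ ·) := by
  induction T generalizing k with
  | nil => exact List.Pairwise.nil
  | cons r T ih =>
    rcases lt_or_ge k r.m with hk | hk
    · have hq (x : ℕ) (hx : x ∈ tabColumn k T) : r.q ⟨k, hk⟩ ≤ x :=
        h.le_of_mem_tabColumn_tail (ih h.tail) hk hx
      have hpq : r.p ⟨k, hk⟩ ≤ r.q ⟨k, hk⟩ := h.2.2.1 r List.mem_cons_self ⟨k, hk⟩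
      rw [tabColumn_cons_of_lt hk, List.pairwise_cons, List.pairwise_cons]
      exact ⟨List.forall_mem_cons.2 ⟨hpq, fun x hx => hpq.trans (hq x hx)⟩, hq, ih h.tail k⟩
    · rw [tabColumn_cons_of_le hk]
      exact ih h.tail k

theorem DoublyStandard.head_eq_of_tabColumn_eq {n : ℕ} {r r' : DRow} {T T' : List DRow}
    (h : DoublyStandard (r :: T)) (h' : DoublyStandard (r' :: T')) (hr : r.m ≤ n) (hr' : r'.m ≤ n)
    (hcol : ∀ k < n, tabColumn k (r :: T) = tabColumn k (r' :: T')) : r = r' := by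
  have hlen (k : ℕ) (hk : k < n) : r.m ≤ k ↔ r'.m ≤ k := by
    rw [← h.tabColumn_eq_nil_iff, ← h'.tabColumn_eq_nil_iff, hcol k hk]
  obtain ⟨m, p, q⟩ := r
  obtain ⟨m', p', q'⟩ := r'
  obtain rfl : m = m' := by
    by_contra hne
    rcases Nat.lt_or_gt_of_ne hne with hlt | hlt
    · exact hlt.not_ge ((hlen m (hlt.trans_le hr')).1 le_rfl)
    · exact hlt.not_ge ((hlen m' (hlt.trans_le hr)).2 le_rfl)
  have hpq (k : Fin m) : p k = p' k ∧ q k = q' k := by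
    have hk := hcol k (k.2.trans_le hr)
    rw [tabColumn_cons_of_lt k.2, tabColumn_cons_of_lt k.2] at hk
    exact ⟨(List.cons.inj hk).1, (List.cons.inj (List.cons.inj hk).2).1⟩
  rw [show p = p' from funext fun k => (hpq k).1, show q = q' from funext fun k => (hpq k).2]

theorem DoublyStandard.eq_of_tabColumn_eq {n : ℕ} {T T' : List DRow} (h : DoublyStandard T)
    (h' : DoublyStandard T') (hm : ∀ r ∈ T, 1 ≤ r.m ∧ r.m ≤ n) (hm' : ∀ r ∈ T', 1 ≤ r.m ∧ r.m ≤ n)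
    (hcol : ∀ k < n, tabColumn k T = tabColumn k T') : T = T' := by
  induction T generalizing T' with
  | nil =>
    rcases T' with _ | ⟨r', T'⟩
    · rfl
    · obtain ⟨hpos, hle⟩ := hm' r' List.mem_cons_self
      exact absurd (h'.tabColumn_eq_nil_iff.1 (hcol 0 (hpos.trans hle)).symm) (by lia)
  | cons r T ih =>
    obtain ⟨hpos, hle⟩ := hm r List.mem_cons_self
    rcases T' with _ | ⟨r', T'⟩
    · exact absurd (h.tabColumn_eq_nil_iff.1 (hcol 0 (hpos.trans hle))) (by lia)
    · obtain rfl := h.head_eq_of_tabColumn_eq h' hle (hm' r' List.mem_cons_self).2 hcol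
      rw [ih h.tail h'.tail (fun s hs => hm s (List.mem_cons_of_mem r hs))
        (fun s hs => hm' s (List.mem_cons_of_mem r hs)) fun k hk => ?_]
      exact List.append_cancel_left (hcol k hk)

end Columns

section LinearIndependence

theorem pairExponent_castLE_apply {n m : ℕ} (h : m ≤ n) (p : Fin m → ℕ) (i : ℕ) (k : Fin n) :
    pairExponent p (Fin.castLE h) (i, k) =
      if hk : (k : ℕ) < m then if p ⟨k, hk⟩ = i then 1 else 0 else 0 := by
  have hval (b : Fin m) : Fin.castLE h b = k ↔ (b : ℕ) = k := Fin.ext_iff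
  simp only [pairExponent, Finsupp.finsetSum_apply, Finsupp.single_apply, Prod.mk.injEq, hval]
  split_ifs with hk hp
  · rw [Finset.sum_eq_single ⟨k, hk⟩ (fun b _ hb => if_neg fun hbk => hb (Fin.ext hbk.2)) (by simp)]
    exact if_pos ⟨hp, rfl⟩
  · refine Finset.sum_eq_zero fun b _ => if_neg ?_
    rintro ⟨hpb, hbk⟩
    exact hp ((congrArg p (Fin.ext hbk.symm)).trans hpb)
  · exact Finset.sum_eq_zero fun b _ => if_neg fun hbk : p b = i ∧ (b : ℕ) = k => hk (hbk.2 ▸ b.2)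

theorem count_tabColumn_cons {n : ℕ} {r : DRow} (h : r.m ≤ n) (T : List DRow) (i : ℕ)
    (k : Fin n) :
    (tabColumn k (r :: T)).count i =
      (pairExponent r.p (Fin.castLE h) + pairExponent r.q (Fin.castLE h)) (i, k) +
        (tabColumn k T).count i := by
  rw [Finsupp.add_apply, pairExponent_castLE_apply, pairExponent_castLE_apply]
  split_ifs with hk <;> simp_all [tabColumn_cons_of_lt, tabColumn_cons_of_le] <;> lia

theorem DoublyStandard.exists_hasLeadingExponent {n : ℕ} (K : Type*) [Field K] {T : List DRow}
    (hT : DoublyStandard T) (hm : ∀ r ∈ T, r.m ≤ n) :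
    ∃ e, HasLeadingExponent (tabPoly n K T) e ∧ ∀ i k, e (i, k) = (tabColumn k T).count i := by
  induction T with
  | nil => exact ⟨0, hasLeadingExponent_one n K, fun _ _ => rfl⟩
  | cons r T ih =>
    obtain ⟨e, he, hcount⟩ := ih hT.tail fun s hs => hm s (List.mem_cons_of_mem r hs)
    obtain ⟨hp, hq⟩ := hT.2.1 r List.mem_cons_self
    refine ⟨_, (rowPoly_hasLeadingExponent K (hm r List.mem_cons_self) hp hq).mul he,
      fun i k => ?_⟩
    rw [Finsupp.add_apply, hcount, count_tabColumn_cons]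

theorem linearIndependent_tabPoly (n : ℕ) (K : Type*) [Field K] :
    LinearIndependent K
      fun T : {T : List DRow // DoublyStandard T ∧ ∀ r ∈ T, 1 ≤ r.m ∧ r.m ≤ n} =>
        tabPoly n K T.1 := by
  have hex (T : {T : List DRow // DoublyStandard T ∧ ∀ r ∈ T, 1 ≤ r.m ∧ r.m ≤ n}) :=
    T.2.1.exists_hasLeadingExponent K fun r hr => (T.2.2 r hr).2
  choose e he hcount using hex
  refine linearIndependent_of_injective_supDegree (D := lexExponent n)
    (fun T => (he T).1.ne_zero) fun T T' hTT' => ?_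
  have hee' : e T = e T' := (lexExponent n).injective ((he T).2.symm.trans (hTT'.trans (he T').2))
  refine Subtype.ext (T.2.1.eq_of_tabColumn_eq T'.2.1 T.2.2 T'.2.2 fun k hk => ?_)
  refine List.Perm.eq_of_pairwise' (T.2.1.pairwise_tabColumn k) (T'.2.1.pairwise_tabColumn k)
    (List.perm_iff_count.2 fun i => ?_)
  rw [← hcount T i ⟨k, hk⟩, hee', hcount T' i ⟨k, hk⟩]

end LinearIndependence

section Spanning

theorem rowPoly_mem_Rsub (n : ℕ) (K : Type*) [Field K] (r : DRow) : rowPoly n K r ∈ Rsub n K := by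
  rw [rowPoly, Matrix.det_apply]
  refine Subalgebra.sum_mem _ fun τ _ => ?_
  rw [Units.smul_def]
  refine Subalgebra.zsmul_mem _ (Subalgebra.prod_mem _ fun a _ => ?_) _
  exact Algebra.subset_adjoin ⟨(_, _), rfl⟩

theorem tabPoly_mem_Rsub (n : ℕ) (K : Type*) [Field K] (T : List DRow) :
    tabPoly n K T ∈ Rsub n K :=
  Subalgebra.list_prod_mem _ (List.forall_mem_map.2 fun r _ => rowPoly_mem_Rsub n K r)

theorem toSubmodule_Rsub (n : ℕ) (K : Type*) [Field K] :
    Subalgebra.toSubmodule (Rsub n K) = Submodule.span K (Set.range (tabPoly n K)) := by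
  refine le_antisymm ?_ (Submodule.span_le.2 (Set.range_subset_iff.2 (tabPoly_mem_Rsub n K)))
  rw [Rsub, Algebra.adjoin_eq_span]
  refine Submodule.span_mono fun x hx => ?_
  induction hx using Submonoid.closure_induction with
  | mem x hx =>
    obtain ⟨⟨i, j⟩, rfl⟩ := hx
    exact ⟨[⟨1, fun _ => i, fun _ => j⟩], by simp [tabPoly, rowPoly]⟩
  | one => exact ⟨[], rfl⟩
  | mul x y _ _ hx hy =>
    obtain ⟨T, rfl⟩ := hx
    obtain ⟨T', rfl⟩ := hy
    exact ⟨T ++ T', by simp only [tabPoly, List.map_append, List.prod_append]⟩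

theorem tabPoly_mem_span_doublyStandard (n : ℕ) (K : Type*) [Field K] (T : List DRow) :
    tabPoly n K T ∈ Submodule.span K (Set.range
      fun T : {T : List DRow // DoublyStandard T ∧ ∀ r ∈ T, 1 ≤ r.m ∧ r.m ≤ n} =>
        tabPoly n K T.1) := by
  have hsymm (i j : ℕ) : tpair n K i j = tpair n K j i :=
    Finset.sum_congr rfl fun k _ => mul_comm _ _
  refine (AddSubgroup.closure_le (Submodule.span K _).toAddSubgroup).2 ?_
    (tabDet_mem_closure_doublyStandard hsymm T)
  rintro _ ⟨T', ⟨hT', hpos⟩, rfl⟩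
  by_cases hle : ∀ r ∈ T', r.m ≤ n
  · exact Submodule.subset_span ⟨⟨T', hT', fun r hr => ⟨hpos r hr, hle r hr⟩⟩, rfl⟩
  · push Not at hle
    obtain ⟨r, hr, hlt⟩ := hle
    have hzero : tabDet (tpair n K) T' = 0 :=
      List.prod_eq_zero (List.mem_map.2 ⟨r, hr, rowPoly_eq_zero_of_lt K hlt⟩)
    exact hzero ▸ (Submodule.span K _).zero_mem

theorem span_tabPoly_doublyStandard (n : ℕ) (K : Type*) [Field K] :
    Submodule.span K (Set.range
      fun T : {T : List DRow // DoublyStandard T ∧ ∀ r ∈ T, 1 ≤ r.m ∧ r.m ≤ n} =>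
        tabPoly n K T.1) = Subalgebra.toSubmodule (Rsub n K) := by
  rw [toSubmodule_Rsub]
  refine le_antisymm (Submodule.span_mono ?_) (Submodule.span_le.2 ?_)
  · exact Set.range_subset_iff.2 fun T => ⟨T.1, rfl⟩
  · exact Set.range_subset_iff.2 (tabPoly_mem_span_doublyStandard n K)

end Spanning

theorem stmt19_general (K : Type*) [Field K] (n : ℕ) :
    LinearIndependent K
      (fun T : {T : List DRow // DoublyStandard T ∧ ∀ r ∈ T, 1 ≤ r.m ∧ r.m ≤ n} =>
        tabPoly n K T.1) ∧
    Submodule.span K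
        (Set.range
          (fun T : {T : List DRow // DoublyStandard T ∧ ∀ r ∈ T, 1 ≤ r.m ∧ r.m ≤ n} =>
            tabPoly n K T.1)) =
      Subalgebra.toSubmodule (Rsub n K) :=
  ⟨linearIndependent_tabPoly n K, span_tabPoly_doublyStandard n K⟩

/-- De Concini–Procesi: the polynomials `φ(T)`, for `T` ranging over the doubly standard
tableaux with rows of length between `1` and `n`, form a basis of `R` as a `K`-vector
space (they are linearly independent and span `R`). -/
theorem stmt19 (K : Type*) [Field K] [Infinite K] (h2 : (2 : K) ≠ 0)
    (n : ℕ) (hn : 1 ≤ n) :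
    LinearIndependent K
      (fun T : {T : List DRow // DoublyStandard T ∧ ∀ r ∈ T, 1 ≤ r.m ∧ r.m ≤ n} =>
        tabPoly n K T.1) ∧
    Submodule.span K
        (Set.range
          (fun T : {T : List DRow // DoublyStandard T ∧ ∀ r ∈ T, 1 ≤ r.m ∧ r.m ≤ n} =>
            tabPoly n K T.1)) =
      Subalgebra.toSubmodule (Rsub n K) :=
  stmt19_general K n
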